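/- arXiv:2410.15662 — 2 statements merged into one kernel-verified Lean document; each statement's English description precedes it below -/
import Mathlib

section
/- Let N = 1, T > 0, α > 0, λ_0 > 0, and let f : ℝ × (0,T) → ℝ be non-negative and measurable with sup_{x∈ℝ} f(x,t)e^{−λ_0 x} bounded from above on (0,T). Let s_0 ∈ ℝ. Then there exists no pair (u, s) with s : [0,T) → ℝ continuous on [0,T), continuously differentiable on (0,T), s(0) = s_0, and u a non-negative classical solution of ∂_t u − ∂_x² u = f on {(x,t) : x > s(t), 0 < t < T} with sup_{x∈ℝ, 0<t<T} u(x,t)e^{−λ_0 x} < ∞, satisfying u(s(t),t) = 0, ∂_x u(s(t),t) = α for 0 < t < T, continuous up to t = 0 with u(·,0) ≡ 0. -/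
set_option autoImplicit false

open Set Filter

/-!
A travelling wave `φ (x - m - c * t)` with `φ ξ = (α * (1 - exp (-c * ξ)) - F * ξ) / c` solves
`∂ₜw - ∂ₓ²w = F`, vanishes on the line `x = m + c * t` and has slope `α - F / c < α` there. For
small `ρ` and large `c` it is non-negative for `0 ≤ ξ ≤ ρ` and at least `α / (4 * c)` at `ξ = ρ`.

Let `η` bound the displacement of `s` on a short interval `[0, τ]` and take `c = η / τ`. The last
line of slope `c` lying to the left of the free boundary touches it at a positive time `t₁`, because
`s` rises by at most `η` over the whole interval. A quadratic barrier shows that `u` grows at most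
linearly in time at a fixed distance `ρ`, so there `u ≤ (F + 2) * τ = (F + 2) * η / c`, which is
below the wave once `η` is small. By comparison `u` lies below the wave, and at the touching point
its slope is at most `α - F / c`, hence not `α`.
-/

section Calculus

open scoped Topology

theorem hasDerivWithinAt_nonpos_of_isLocalMaxOn_Ici {g : ℝ → ℝ} {d a : ℝ}
    (hg : HasDerivWithinAt g d (Ici a) a) (hmax : IsLocalMaxOn g (Ici a) a) : d ≤ 0 := by
  have hcone : (1 : ℝ) ∈ posTangentConeAt (Ici a) a :=
    mem_posTangentConeAt_of_segment_subset <|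
      (convex_Ici a).segment_subset self_mem_Ici (by simp)
  simpa using hmax.hasFDerivWithinAt_nonpos hg.hasFDerivWithinAt hcone

theorem hasDerivWithinAt_nonneg_of_isLocalMaxOn_Iic {g : ℝ → ℝ} {d a : ℝ}
    (hg : HasDerivWithinAt g d (Iic a) a) (hmax : IsLocalMaxOn g (Iic a) a) : 0 ≤ d := by
  have hcone : (-1 : ℝ) ∈ posTangentConeAt (Iic a) a :=
    mem_posTangentConeAt_of_segment_subset <|
      (convex_Iic a).segment_subset self_mem_Iic (by simp)
  simpa using hmax.hasFDerivWithinAt_nonpos hg.hasFDerivWithinAt hcone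

theorem hasDerivWithinAt_Ici_le_of_eventually_le {g k : ℝ → ℝ} {g' k' a : ℝ}
    (hg : HasDerivWithinAt g g' (Ici a) a) (hk : HasDerivWithinAt k k' (Ici a) a)
    (heq : g a = k a) (hle : ∀ᶠ x in 𝓝[≥] a, g x ≤ k x) : g' ≤ k' := by
  refine sub_nonpos.1 (hasDerivWithinAt_nonpos_of_isLocalMaxOn_Ici (hg.sub hk) ?_)
  filter_upwards [hle] with x hx
  simpa only [Pi.sub_apply, heq, sub_self, sub_nonpos] using hx

theorem second_deriv_nonpos_of_isLocalMax {g g' : ℝ → ℝ} {d x : ℝ}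
    (hg : ∀ᶠ y in 𝓝 x, HasDerivAt g (g' y) y) (hg' : HasDerivAt g' d x)
    (hmax : IsLocalMax g x) : d ≤ 0 := by
  by_contra! hd
  have hderiv : deriv g =ᶠ[𝓝 x] g' := hg.mono fun y hy => hy.deriv
  have hderiv₂ : deriv (deriv g) x = d := hderiv.deriv_eq.trans hg'.deriv
  have hmin : IsLocalMin g x :=
    isLocalMin_of_deriv_deriv_pos (hderiv₂ ▸ hd) hmax.deriv_eq_zero
      hg.self_of_nhds.continuousAt
  have hconst : g =ᶠ[𝓝 x] fun _ => g x := by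
    filter_upwards [hmax, hmin] with y hle hge using le_antisymm hle hge
  have hzero : deriv (deriv g) x = 0 := by simpa using hconst.deriv.deriv_eq
  exact hd.ne' (hderiv₂.symm.trans hzero)

theorem hasDerivWithinAt_Ici_of_continuousWithinAt {g g' : ℝ → ℝ} {a : ℝ}
    (hg : ContinuousWithinAt g (Ici a) a) (hderiv : ∀ x, a < x → HasDerivAt g (g' x) x)
    (hg' : ContinuousWithinAt g' (Ici a) a) : HasDerivWithinAt g (g' a) (Ici a) a := by
  refine hasDerivWithinAt_Ici_of_tendsto_deriv
    (fun x hx => (hderiv x hx).differentiableAt.differentiableWithinAt)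
    (hg.mono Ioi_subset_Ici_self) self_mem_nhdsWithin ?_
  refine (hg'.mono Ioi_subset_Ici_self).tendsto.congr' ?_
  filter_upwards [self_mem_nhdsWithin] with x hx using (hderiv x hx).deriv.symm

theorem exists_mem_Ioc_isMinOn_Icc {g : ℝ → ℝ} {a b : ℝ} (hab : a < b)
    (hg : ContinuousOn g (Icc a b)) (hba : g b ≤ g a) : ∃ x ∈ Ioc a b, IsMinOn g (Icc a b) x := by
  obtain ⟨x, hx, hmin⟩ := isCompact_Icc.exists_isMinOn (nonempty_Icc.2 hab.le) hg
  rcases hx.1.eq_or_lt with rfl | hax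
  · exact ⟨b, right_mem_Ioc.2 hab, fun y hy => hba.trans (hmin hy)⟩
  · exact ⟨x, ⟨hax, hx.2⟩, hmin⟩

theorem exists_touching_line {s : ℝ → ℝ} {τ c : ℝ} (hτ : 0 < τ) (hc : 0 ≤ c)
    (hs : ContinuousOn s (Icc 0 τ)) (hdist : ∀ t ∈ Icc 0 τ, |s t - s 0| ≤ c * τ) :
    ∃ t₁ ∈ Ioc 0 τ, ∃ m ∈ Icc (s 0 - 2 * (c * τ)) (s 0),
      s t₁ = m + c * t₁ ∧ ∀ t ∈ Icc 0 τ, m + c * t ≤ s t := by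
  have hend : s τ - s 0 ≤ c * τ := (le_abs_self _).trans (hdist τ (right_mem_Icc.2 hτ.le))
  obtain ⟨t₁, ht₁, hmin⟩ := exists_mem_Ioc_isMinOn_Icc (g := fun t => s t - c * t) hτ
    (hs.sub (by fun_prop)) (by linarith)
  have hline : ∀ t ∈ Icc 0 τ, s t₁ - c * t₁ + c * t ≤ s t := fun t ht =>
    le_sub_iff_add_le.1 (hmin ht)
  refine ⟨t₁, ht₁, s t₁ - c * t₁, ⟨?_, ?_⟩, (sub_add_cancel _ _).symm, hline⟩
  · have hlow := neg_le_of_abs_le (hdist t₁ (Ioc_subset_Icc_self ht₁))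
    have hct₁ : c * t₁ ≤ c * τ := mul_le_mul_of_nonneg_left ht₁.2 hc
    linarith
  · simpa using hline 0 (left_mem_Icc.2 hτ.le)

theorem eventually_mul_lt_nhdsGT_zero (a : ℝ) {k : ℝ} (hk : 0 < k) :
    ∀ᶠ x in 𝓝[>] (0 : ℝ), a * x < k :=
  nhdsWithin_le_nhds <|
    (Continuous.tendsto' (by fun_prop) 0 0 (mul_zero a)).eventually_lt_const hk

theorem eventually_forall_Icc_of_eventually_nhdsGE {P : ℝ → Prop} {a : ℝ}
    (h : ∀ᶠ t in 𝓝[≥] a, P t) : ∀ᶠ τ in 𝓝[>] a, ∀ t ∈ Icc a τ, P t := by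
  obtain ⟨v, hv, hsub⟩ := mem_nhdsGE_iff_exists_Icc_subset.1 h
  filter_upwards [Ioc_mem_nhdsGT hv] with τ hτ t ht using hsub ⟨ht.1, ht.2.trans hτ.2⟩

end Calculus

section Comparison

open scoped Topology

/-- The space-time region between the graphs of `a` and `b` (boundary curves included) over the
times in `I`; points are written `(x, t)`. -/
def movingStrip (a b : ℝ → ℝ) (I : Set ℝ) : Set (ℝ × ℝ) :=
  {p | p.2 ∈ I ∧ p.1 ∈ Icc (a p.2) (b p.2)}

/-- The parabolic boundary of `movingStrip a b (Icc t₀ t₁)`: its initial slice and its two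
lateral sides. -/
def parabolicBoundary (a b : ℝ → ℝ) (t₀ t₁ : ℝ) : Set (ℝ × ℝ) :=
  {p ∈ movingStrip a b (Icc t₀ t₁) | p.2 = t₀ ∨ p.1 = a p.2 ∨ p.1 = b p.2}

/-- The derivatives entering the heat operator at `(x, t)`: `ux` is the function `∂ₓu` (needed on a
whole line to differentiate it again), while `uxx` and `ut` are the values of `∂ₓ²u` and `∂ₜu`. -/
structure HasHeatDerivAt (u ux : ℝ → ℝ → ℝ) (uxx ut x t : ℝ) : Prop where
  space : HasDerivAt (fun ξ => u ξ t) (ux x t) x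
  space_space : HasDerivAt (fun ξ => ux ξ t) uxx x
  time : HasDerivAt (fun τ => u x τ) ut t

theorem HasHeatDerivAt.sub {u ux w wx : ℝ → ℝ → ℝ} {uxx ut wxx wt x t : ℝ}
    (hu : HasHeatDerivAt u ux uxx ut x t) (hw : HasHeatDerivAt w wx wxx wt x t) :
    HasHeatDerivAt (fun ξ τ => u ξ τ - w ξ τ) (fun ξ τ => ux ξ τ - wx ξ τ)
      (uxx - wxx) (ut - wt) x t where
  space := hu.space.sub hw.space
  space_space := hu.space_space.sub hw.space_space
  time := hu.time.sub hw.time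

theorem hasHeatDerivAt_sq_add_mul (y C x t : ℝ) :
    HasHeatDerivAt (fun ξ τ => (ξ - y) ^ 2 + C * τ) (fun ξ _ => 2 * (ξ - y)) 2 C x t where
  space := by simpa using (((hasDerivAt_id x).sub_const y).pow 2).add_const (C * t)
  space_space := by simpa using ((hasDerivAt_id x).sub_const y).const_mul 2
  time := by simpa using ((hasDerivAt_id t).const_mul C).const_add ((x - y) ^ 2)

theorem hasHeatDerivAt_travelingWave {φ φ' : ℝ → ℝ} {d m c x t : ℝ}
    (hφ : HasDerivAt φ (φ' (x - (m + c * t))) (x - (m + c * t)))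
    (hφ' : HasDerivAt φ' d (x - (m + c * t))) :
    HasHeatDerivAt (fun ξ τ => φ (ξ - (m + c * τ))) (fun ξ τ => φ' (ξ - (m + c * τ)))
      d (-c * φ' (x - (m + c * t))) x t where
  space := hφ.comp_sub_const x _
  space_space := hφ'.comp_sub_const x _
  time := by
    have hline : HasDerivAt (fun τ => x - (m + c * τ)) (-c) t := by
      simpa using (((hasDerivAt_id t).const_mul c).const_add m).const_sub x
    exact (hφ.comp t hline).congr_deriv (mul_comm _ _)

variable {a b : ℝ → ℝ} {t₀ t₁ : ℝ}

theorem isCompact_movingStrip (ha : ContinuousOn a (Icc t₀ t₁)) (hb : ContinuousOn b (Icc t₀ t₁)) :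
    IsCompact (movingStrip a b (Icc t₀ t₁)) := by
  obtain ⟨l, hl⟩ := (isCompact_Icc.image_of_continuousOn ha).bddBelow
  obtain ⟨r, hr⟩ := (isCompact_Icc.image_of_continuousOn hb).bddAbove
  set box : Set (ℝ × ℝ) := Icc l r ×ˢ Icc t₀ t₁
  have hbox : IsClosed box := isClosed_Icc.prod isClosed_Icc
  have hsnd : MapsTo Prod.snd box (Icc t₀ t₁) := fun _ hp => hp.2
  have hsub : movingStrip a b (Icc t₀ t₁) ⊆ box := fun p ⟨ht, hap, hpb⟩ =>
    ⟨⟨(hl (mem_image_of_mem a ht)).trans hap, hpb.trans (hr (mem_image_of_mem b ht))⟩, ht⟩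
  have hstrip : movingStrip a b (Icc t₀ t₁) =
      {p ∈ box | a p.2 ≤ p.1} ∩ {p ∈ box | p.1 ≤ b p.2} := by
    ext p
    exact ⟨fun hp => ⟨⟨hsub hp, hp.2.1⟩, hsub hp, hp.2.2⟩,
      fun ⟨⟨hp, hap⟩, _, hpb⟩ => ⟨hp.2, hap, hpb⟩⟩
  refine (isCompact_Icc.prod isCompact_Icc).of_isClosed_subset ?_ hsub
  rw [hstrip]
  exact (hbox.isClosed_le (ha.comp continuousOn_snd hsnd) continuousOn_fst).inter
    (hbox.isClosed_le continuousOn_fst (hb.comp continuousOn_snd hsnd))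

theorem HasHeatDerivAt.space_space_le_time_of_isMaxOn_movingStrip {z zx : ℝ → ℝ → ℝ}
    {zxx zt x t : ℝ} (ha : ContinuousOn a (Icc t₀ t₁)) (hb : ContinuousOn b (Icc t₀ t₁))
    (ht : t ∈ Ioc t₀ t₁) (hx : x ∈ Ioo (a t) (b t)) (hz : HasHeatDerivAt z zx zxx zt x t)
    (hzx : ∀ y ∈ Ioo (a t) (b t), HasDerivAt (fun ξ => z ξ t) (zx y t) y)
    (hmax : IsMaxOn (fun p : ℝ × ℝ => z p.1 p.2) (movingStrip a b (Icc t₀ t₁)) (x, t)) :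
    zxx ≤ zt := by
  have ht' : t ∈ Icc t₀ t₁ := Ioc_subset_Icc_self ht
  have hspace : zxx ≤ 0 := by
    have hnhds : Ioo (a t) (b t) ∈ 𝓝 x := Ioo_mem_nhds hx.1 hx.2
    refine second_deriv_nonpos_of_isLocalMax (mem_of_superset hnhds hzx) hz.space_space ?_
    filter_upwards [hnhds] with y hy
    exact hmax (show (y, t) ∈ movingStrip a b _ from ⟨ht', Ioo_subset_Icc_self hy⟩)
  have htime : 0 ≤ zt := by
    have hpast : Icc t₀ t₁ ∈ 𝓝[≤] t :=
      mem_of_superset (Icc_mem_nhdsLE ht.1) (Icc_subset_Icc_right ht.2)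
    refine hasDerivWithinAt_nonneg_of_isLocalMaxOn_Iic hz.time.hasDerivWithinAt ?_
    filter_upwards [hpast,
      ((ha t ht').mono_of_mem_nhdsWithin hpast).eventually_lt_const hx.1,
      ((hb t ht').mono_of_mem_nhdsWithin hpast).eventually_const_lt hx.2] with q hq haq hqb
    exact hmax (show (x, q) ∈ movingStrip a b _ from ⟨hq, haq.le, hqb.le⟩)
  exact hspace.trans htime

theorem nonpos_on_movingStrip_of_strict_subsolution {z zx zxx zt : ℝ → ℝ → ℝ}
    (ha : ContinuousOn a (Icc t₀ t₁)) (hb : ContinuousOn b (Icc t₀ t₁))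
    (hz : ContinuousOn (fun p : ℝ × ℝ => z p.1 p.2) (movingStrip a b (Icc t₀ t₁)))
    (hderiv : ∀ t ∈ Ioc t₀ t₁, ∀ x ∈ Ioo (a t) (b t),
      HasHeatDerivAt z zx (zxx x t) (zt x t) x t)
    (hstrict : ∀ t ∈ Ioc t₀ t₁, ∀ x ∈ Ioo (a t) (b t), zt x t < zxx x t)
    (hbdry : ∀ p ∈ parabolicBoundary a b t₀ t₁, z p.1 p.2 ≤ 0) :
    ∀ p ∈ movingStrip a b (Icc t₀ t₁), z p.1 p.2 ≤ 0 := by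
  intro p hp
  obtain ⟨⟨x, t⟩, hxt, hmax⟩ := (isCompact_movingStrip ha hb).exists_isMaxOn ⟨p, hp⟩ hz
  refine (hmax hp).trans ?_
  by_cases hboundary : (x, t) ∈ parabolicBoundary a b t₀ t₁
  · exact hbdry _ hboundary
  have hne : ¬(t = t₀ ∨ x = a t ∨ x = b t) := fun h => hboundary ⟨hxt, h⟩
  push Not at hne
  obtain ⟨ht, hax, hxb⟩ := hxt
  have ht' : t ∈ Ioc t₀ t₁ := ⟨ht.1.lt_of_ne' hne.1, ht.2⟩
  have hx' : x ∈ Ioo (a t) (b t) := ⟨hax.lt_of_ne' hne.2.1, hxb.lt_of_ne hne.2.2⟩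
  exact absurd (hstrict t ht' x hx') <| not_lt.2 <|
    (hderiv t ht' x hx').space_space_le_time_of_isMaxOn_movingStrip ha hb ht' hx'
      (fun y hy => (hderiv t ht' y hy).space) hmax

theorem le_on_movingStrip_of_le_on_parabolicBoundary {u ux uxx ut w wx wxx wt : ℝ → ℝ → ℝ}
    (ha : ContinuousOn a (Icc t₀ t₁)) (hb : ContinuousOn b (Icc t₀ t₁))
    (huc : ContinuousOn (fun p : ℝ × ℝ => u p.1 p.2) (movingStrip a b (Icc t₀ t₁)))
    (hwc : ContinuousOn (fun p : ℝ × ℝ => w p.1 p.2) (movingStrip a b (Icc t₀ t₁)))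
    (hu : ∀ t ∈ Ioc t₀ t₁, ∀ x ∈ Ioo (a t) (b t), HasHeatDerivAt u ux (uxx x t) (ut x t) x t)
    (hw : ∀ t ∈ Ioc t₀ t₁, ∀ x ∈ Ioo (a t) (b t), HasHeatDerivAt w wx (wxx x t) (wt x t) x t)
    (hheat : ∀ t ∈ Ioc t₀ t₁, ∀ x ∈ Ioo (a t) (b t), ut x t - uxx x t ≤ wt x t - wxx x t)
    (hbdry : ∀ p ∈ parabolicBoundary a b t₀ t₁, u p.1 p.2 ≤ w p.1 p.2) :
    ∀ p ∈ movingStrip a b (Icc t₀ t₁), u p.1 p.2 ≤ w p.1 p.2 := by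
  -- subtracting `ε * (t - t₀)` makes the differential inequality strict
  have hpenalized : ∀ ε > 0, ∀ p ∈ movingStrip a b (Icc t₀ t₁),
      u p.1 p.2 - w p.1 p.2 - ε * (p.2 - t₀) ≤ 0 := by
    intro ε hε
    have hpen : ∀ x t, HasHeatDerivAt (fun _ τ => ε * (τ - t₀)) (fun _ _ => 0) 0 ε x t :=
      fun x t => ⟨hasDerivAt_const x _, hasDerivAt_const x _, by
        simpa using ((hasDerivAt_id t).sub_const t₀).const_mul ε⟩
    refine nonpos_on_movingStrip_of_strict_subsolution ha hb
      (z := fun x t => u x t - w x t - ε * (t - t₀))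
      (zxx := fun x t => uxx x t - wxx x t - 0) (zt := fun x t => ut x t - wt x t - ε)
      ((huc.sub hwc).sub (by fun_prop))
      (fun t ht x hx => ((hu t ht x hx).sub (hw t ht x hx)).sub (hpen x t))
      (fun t ht x hx => by linarith [hheat t ht x hx]) fun p hp => ?_
    have hle := hbdry p hp
    have hpos : 0 ≤ ε * (p.2 - t₀) := mul_nonneg hε.le (sub_nonneg.2 hp.1.1.1)
    linarith
  intro p hp
  have htime : 0 ≤ p.2 - t₀ := sub_nonneg.2 hp.1.1
  refine le_of_forall_pos_le_add fun δ hδ => ?_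
  have hle := hpenalized (δ / (p.2 - t₀ + 1)) (by positivity) p hp
  have hδ' : δ / (p.2 - t₀ + 1) * (p.2 - t₀) ≤ δ := by
    rw [div_mul_eq_mul_div, div_le_iff₀ (by positivity)]
    linarith
  linarith

end Comparison

section TravelingBarrier

/-- The profile of the travelling supersolution: `w x t = travelingBarrier α F c (x - (m + c * t))`
solves `∂ₜw - ∂ₓ²w = F`. -/
noncomputable def travelingBarrier (α F c ξ : ℝ) : ℝ :=
  (α * (1 - Real.exp (-(c * ξ))) - F * ξ) / c

variable {α F c ξ : ℝ}

theorem travelingBarrier_zero (α F c : ℝ) : travelingBarrier α F c 0 = 0 := by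
  simp [travelingBarrier]

theorem continuous_travelingBarrier (α F c : ℝ) : Continuous (travelingBarrier α F c) := by
  unfold travelingBarrier
  fun_prop

theorem hasDerivAt_exp_neg_mul (c ξ : ℝ) :
    HasDerivAt (fun x => Real.exp (-(c * x))) (-c * Real.exp (-(c * ξ))) ξ := by
  simpa [mul_comm] using ((hasDerivAt_id ξ).const_mul c).neg.exp

theorem hasDerivAt_travelingBarrier (hc : c ≠ 0) :
    HasDerivAt (travelingBarrier α F c) (α * Real.exp (-(c * ξ)) - F / c) ξ := by
  refine (((((hasDerivAt_exp_neg_mul c ξ).const_sub 1).const_mul α).sub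
    ((hasDerivAt_id ξ).const_mul F)).div_const c).congr_deriv ?_
  field_simp

theorem hasHeatDerivAt_travelingBarrier (hc : c ≠ 0) (m x t : ℝ) :
    HasHeatDerivAt (fun ξ τ => travelingBarrier α F c (ξ - (m + c * τ)))
      (fun ξ τ => α * Real.exp (-(c * (ξ - (m + c * τ)))) - F / c)
      (α * (-c * Real.exp (-(c * (x - (m + c * t))))))
      (-c * (α * Real.exp (-(c * (x - (m + c * t)))) - F / c)) x t :=
  hasHeatDerivAt_travelingWave (φ' := fun ξ => α * Real.exp (-(c * ξ)) - F / c)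
    (hasDerivAt_travelingBarrier hc) (((hasDerivAt_exp_neg_mul c _).const_mul α).sub_const _)

theorem div_one_add_le_one_sub_exp_neg {y : ℝ} (hy : 0 ≤ y) :
    y / (1 + y) ≤ 1 - Real.exp (-y) := by
  have hexp : Real.exp (-y) ≤ (1 + y)⁻¹ := by
    rw [Real.exp_neg]
    exact inv_anti₀ (by positivity) (by linarith [Real.add_one_le_exp y])
  calc y / (1 + y) = 1 - (1 + y)⁻¹ := by field_simp; ring
    _ ≤ 1 - Real.exp (-y) := by gcongr

theorem travelingBarrier_nonneg (hα : 0 ≤ α) (hc : 0 < c) (hξ : 0 ≤ ξ)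
    (hFc : 2 * F ≤ α * c) (hFξ : 2 * (F * ξ) ≤ α) : 0 ≤ travelingBarrier α F c ξ := by
  have hy : 0 ≤ c * ξ := by positivity
  have hF : F * ξ ≤ α * (c * ξ / (1 + c * ξ)) := by
    rw [← mul_div_assoc, le_div_iff₀ (by positivity)]
    linarith [mul_le_mul_of_nonneg_right hFc hξ, mul_le_mul_of_nonneg_right hFξ hy]
  have hexp := mul_le_mul_of_nonneg_left (div_one_add_le_one_sub_exp_neg hy) hα
  exact div_nonneg (by linarith) hc.le

theorem div_le_travelingBarrier (hα : 0 ≤ α) (hc : 0 < c) (hcξ : 1 ≤ c * ξ)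
    (hFξ : 4 * (F * ξ) ≤ α) : α / (4 * c) ≤ travelingBarrier α F c ξ := by
  have hhalf : 1 / 2 ≤ c * ξ / (1 + c * ξ) := by
    rw [div_le_div_iff₀ two_pos (by linarith)]
    linarith
  have hexp := mul_le_mul_of_nonneg_left
    (hhalf.trans (div_one_add_le_one_sub_exp_neg (zero_le_one.trans hcξ))) hα
  rw [travelingBarrier, ← div_div]
  gcongr
  linarith

end TravelingBarrier

section FreeBoundary

open scoped Topology

/-- A classical subsolution `∂ₜu - ∂ₓ²u ≤ F` on the strip `s t < x < b`, `0 < t < T`, to the right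
of a free boundary `s` on which `u` vanishes, continuous on the closed strip up to `t = 0` and
non-positive initially. The functions `ux`, `uxx`, `ut` stand for `∂ₓu`, `∂ₓ²u`, `∂ₜu`. -/
structure IsFreeBoundarySubsolution (T b F : ℝ) (u : ℝ → ℝ → ℝ) (s : ℝ → ℝ)
    (ux uxx ut : ℝ → ℝ → ℝ) : Prop where
  continuousOn_boundary : ContinuousOn s (Ico 0 T)
  continuousOn :
    ContinuousOn (fun p : ℝ × ℝ => u p.1 p.2) (movingStrip s (fun _ => b) (Ico 0 T))
  hasHeatDerivAt : ∀ t ∈ Ioo 0 T, ∀ x ∈ Ioo (s t) b,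
    HasHeatDerivAt u ux (uxx x t) (ut x t) x t
  heat_le : ∀ t ∈ Ioo 0 T, ∀ x ∈ Ioo (s t) b, ut x t - uxx x t ≤ F
  boundary_eq_zero : ∀ t ∈ Ioo 0 T, u (s t) t = 0
  initial_nonpos : ∀ x ∈ Icc (s 0) b, u x 0 ≤ 0

namespace IsFreeBoundarySubsolution

variable {T b F : ℝ} {u ux uxx ut : ℝ → ℝ → ℝ} {s : ℝ → ℝ}

theorem mono (h : IsFreeBoundarySubsolution T b F u s ux uxx ut) {G : ℝ} (hFG : F ≤ G) :
    IsFreeBoundarySubsolution T b G u s ux uxx ut :=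
  { h with heat_le := fun t ht x hx => (h.heat_le t ht x hx).trans hFG }

theorem tendsto_boundary (h : IsFreeBoundarySubsolution T b F u s ux uxx ut) (hT : 0 < T) :
    Tendsto s (𝓝[≥] 0) (𝓝 (s 0)) :=
  (h.continuousOn_boundary 0 (left_mem_Ico.2 hT)).mono_of_mem_nhdsWithin (Ico_mem_nhdsGE hT)

theorem eventually_lt (h : IsFreeBoundarySubsolution T b F u s ux uxx ut) (hT : 0 < T) {x k : ℝ}
    (hx : x ∈ Ioc (s 0) b) (hk : 0 < k) : ∀ᶠ t in 𝓝[≥] 0, u x t < k := by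
  have hmem : ((x, 0) : ℝ × ℝ) ∈ movingStrip s (fun _ => b) (Ico 0 T) :=
    ⟨left_mem_Ico.2 hT, hx.1.le, hx.2⟩
  have hvertical : Tendsto (fun t : ℝ => (x, t)) (𝓝[≥] 0)
      (𝓝[movingStrip s (fun _ => b) (Ico 0 T)] (x, 0)) := by
    refine tendsto_nhdsWithin_iff.2 ⟨?_, ?_⟩
    · exact (Continuous.prodMk_right x).continuousWithinAt
    · filter_upwards [Ico_mem_nhdsGE hT, (h.tendsto_boundary hT).eventually_lt_const hx.1]
        with t ht hst using ⟨ht, hst.le, hx.2⟩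
  exact ((h.continuousOn _ hmem).tendsto.comp hvertical).eventually_lt_const
    ((h.initial_nonpos x (Ioc_subset_Icc_self hx)).trans_lt hk)

theorem le_of_supersolution (h : IsFreeBoundarySubsolution T b F u s ux uxx ut) {τ x₁ : ℝ}
    (hτT : τ < T) (hx₁ : x₁ ≤ b) {w wx wxx wt : ℝ → ℝ → ℝ}
    (hwc : Continuous fun p : ℝ × ℝ => w p.1 p.2)
    (hw : ∀ x t, HasHeatDerivAt w wx (wxx x t) (wt x t) x t)
    (hheat : ∀ x t, F ≤ wt x t - wxx x t)
    (hnonneg : ∀ t ∈ Icc 0 τ, ∀ x ∈ Icc (s t) x₁, 0 ≤ w x t)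
    (hright : ∀ t ∈ Icc 0 τ, u x₁ t ≤ w x₁ t) :
    ∀ t ∈ Icc 0 τ, ∀ x ∈ Icc (s t) x₁, u x t ≤ w x t := by
  have hIcc : Icc 0 τ ⊆ Ico 0 T := Icc_subset_Ico_right hτT
  have hIoc : Ioc 0 τ ⊆ Ioo 0 T := Ioc_subset_Ioo_right hτT
  have hIoo : ∀ t, Ioo (s t) x₁ ⊆ Ioo (s t) b := fun t => Ioo_subset_Ioo_right hx₁
  suffices hcmp : ∀ p ∈ movingStrip s (fun _ => x₁) (Icc 0 τ), u p.1 p.2 ≤ w p.1 p.2 from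
    fun t ht x hx => hcmp (x, t) ⟨ht, hx⟩
  refine le_on_movingStrip_of_le_on_parabolicBoundary
    (h.continuousOn_boundary.mono hIcc) continuousOn_const
    (h.continuousOn.mono fun p hp => ⟨hIcc hp.1, hp.2.1, hp.2.2.trans hx₁⟩) hwc.continuousOn
    (fun t ht x hx => h.hasHeatDerivAt t (hIoc ht) x (hIoo t hx)) (fun t _ x _ => hw x t)
    (fun t ht x hx => (h.heat_le t (hIoc ht) x (hIoo t hx)).trans (hheat x t)) ?_
  rintro ⟨x, t⟩ ⟨⟨ht, hx⟩, hside⟩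
  dsimp only at ht hx hside ⊢
  rcases ht.1.eq_or_lt with rfl | htpos
  · exact (h.initial_nonpos x ⟨hx.1, hx.2.trans hx₁⟩).trans (hnonneg 0 ht x hx)
  rcases hside with rfl | rfl | rfl
  · exact absurd htpos (lt_irrefl _)
  · exact (h.boundary_eq_zero t (hIoc ⟨htpos, ht.2⟩)).trans_le (hnonneg t ht _ hx)
  · exact hright t ht

theorem eventually_le_linear (h : IsFreeBoundarySubsolution T b F u s ux uxx ut) (hT : 0 < T)
    (hF : 0 ≤ F) {x : ℝ} (hx : x ∈ Ioo (s 0) b) : ∀ᶠ t in 𝓝[≥] 0, u x t ≤ (F + 2) * t := by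
  have hsmall : ∀ᶠ t in 𝓝[≥] 0, t < T ∧ s t < x ∧ u b t < (b - x) ^ 2 :=
    (eventually_of_mem (Ico_mem_nhdsGE hT) fun t ht => ht.2).and <|
      ((h.tendsto_boundary hT).eventually_lt_const hx.1).and <|
        h.eventually_lt hT ⟨hx.1.trans hx.2, le_rfl⟩ (pow_pos (sub_pos.2 hx.2) 2)
  obtain ⟨τ, hτ, hsub⟩ := mem_nhdsGE_iff_exists_Icc_subset.1 hsmall
  have hlinear : ∀ t ∈ Icc 0 τ, 0 ≤ (F + 2) * t := fun t ht => mul_nonneg (by linarith) ht.1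
  have hcmp := h.le_of_supersolution (hsub (right_mem_Icc.2 (mem_Ioi.1 hτ).le)).1 le_rfl
    (w := fun y t => (y - x) ^ 2 + (F + 2) * t) (by fun_prop)
    (hasHeatDerivAt_sq_add_mul x (F + 2)) (fun _ _ => by linarith)
    (fun t ht y _ => add_nonneg (sq_nonneg _) (hlinear t ht))
    (fun t ht => (hsub ht).2.2.le.trans (le_add_of_nonneg_right (hlinear t ht)))
  filter_upwards [Icc_mem_nhdsGE hτ] with t ht
  simpa using hcmp t ht x ⟨(hsub ht).2.1.le, hx.2.le⟩

theorem le_travelingBarrier (h : IsFreeBoundarySubsolution T b F u s ux uxx ut)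
    {α c m τ x₁ : ℝ} (hα : 0 ≤ α) (hF : 0 ≤ F) (hc : 0 < c) (hτT : τ < T) (hx₁ : x₁ ≤ b)
    (hline : ∀ t ∈ Icc 0 τ, m + c * t ≤ s t) (hFc : 2 * F ≤ α * c)
    (hlength : 4 * (F * (x₁ - m)) ≤ α) (hright : 1 ≤ c * (x₁ - (m + c * τ)))
    (hu : ∀ t ∈ Icc 0 τ, u x₁ t ≤ α / (4 * c)) :
    ∀ t ∈ Icc 0 τ, ∀ x ∈ Icc (s t) x₁, u x t ≤ travelingBarrier α F c (x - (m + c * t)) := by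
  have hscaled : ∀ t ∈ Icc 0 τ, ∀ x ≤ x₁, 4 * (F * (x - (m + c * t))) ≤ α := by
    intro t ht x hx
    have hct : 0 ≤ c * t := mul_nonneg hc.le ht.1
    calc 4 * (F * (x - (m + c * t))) ≤ 4 * (F * (x₁ - m)) := by
          gcongr
          linarith
      _ ≤ α := hlength
  have hheat : ∀ y, F ≤ -c * (α * Real.exp (-(c * y)) - F / c) -
      α * (-c * Real.exp (-(c * y))) := fun y => le_of_eq (by field_simp; ring)
  refine h.le_of_supersolution hτT hx₁
    ((continuous_travelingBarrier α F c).comp (by fun_prop))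
    (hasHeatDerivAt_travelingBarrier hc.ne' m) (fun _ _ => hheat _) (fun t ht x hx => ?_)
    fun t ht => (hu t ht).trans ?_
  · exact travelingBarrier_nonneg hα hc (sub_nonneg.2 ((hline t ht).trans hx.1)) hFc
      (by linarith [hscaled t ht x hx.2])
  · refine div_le_travelingBarrier hα hc (hright.trans ?_) (hscaled t ht x₁ le_rfl)
    gcongr
    exact ht.2

theorem boundary_slope_le (h : IsFreeBoundarySubsolution T b F u s ux uxx ut)
    {α c m t x₁ β : ℝ} (hc : c ≠ 0) (ht : t ∈ Ioo 0 T) (hst : s t = m + c * t) (hx₁ : s t < x₁)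
    (hle : ∀ x ∈ Icc (s t) x₁, u x t ≤ travelingBarrier α F c (x - (m + c * t)))
    (hβ : HasDerivWithinAt (fun x => u x t) β (Ici (s t)) (s t)) : β ≤ α - F / c := by
  have hbarrier := (hasHeatDerivAt_travelingBarrier (α := α) (F := F) hc m (s t) t).space
  refine (hasDerivWithinAt_Ici_le_of_eventually_le hβ hbarrier.hasDerivWithinAt ?_
    (eventually_of_mem (Icc_mem_nhdsGE hx₁) hle)).trans_eq ?_
  · exact (h.boundary_eq_zero t ht).trans
      (by simp only [hst, sub_self, travelingBarrier_zero])
  · simp [hst]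

theorem exists_barrier_scales (h : IsFreeBoundarySubsolution T b F u s ux uxx ut) (hT : 0 < T)
    {α : ℝ} (hα : 0 < α) (hF : 0 ≤ F) (hb : s 0 < b) :
    ∃ ρ > 0, s 0 + ρ < b ∧ ∃ c > 0, ∃ τ ∈ Ioo 0 T, 8 * F * ρ ≤ α ∧ 4 * (c * τ) ≤ ρ ∧
      2 * F ≤ α * c ∧ 2 ≤ c * ρ ∧
      ∀ t ∈ Icc 0 τ, |s t - s 0| ≤ c * τ ∧ u (s 0 + ρ) t ≤ α / (4 * c) := by
  obtain ⟨ρ, (hρ : 0 < ρ), hρb, hρF⟩ := (eventually_mem_nhdsWithin.and <|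
    (eventually_mul_lt_nhdsGT_zero 1 (sub_pos.2 hb)).and
      (eventually_mul_lt_nhdsGT_zero (8 * F) hα)).exists
  obtain ⟨η, (hη : 0 < η), hηρ, hηα⟩ := (eventually_mem_nhdsWithin.and <|
    (eventually_mul_lt_nhdsGT_zero 4 hρ).and
      (eventually_mul_lt_nhdsGT_zero (4 * (F + 2)) hα)).exists
  have hρb' : s 0 + ρ < b := by linarith
  have hclose : ∀ᶠ t in 𝓝[≥] 0, |s t - s 0| < η :=
    (h.tendsto_boundary hT).eventually (eventually_abs_sub_lt _ hη)
  have hlinear := h.eventually_le_linear hT hF ⟨lt_add_of_pos_right _ hρ, hρb'⟩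
  obtain ⟨τ, ⟨hτ, hτT⟩, hτF, hτρ, hτu⟩ := ((eventually_mem_set.2 (Ioo_mem_nhdsGT hT)).and <|
    (eventually_mul_lt_nhdsGT_zero (2 * F) (mul_pos hα hη)).and <|
      (eventually_mul_lt_nhdsGT_zero 2 (mul_pos hη hρ)).and <|
        eventually_forall_Icc_of_eventually_nhdsGE (hclose.and hlinear)).exists
  have hcτ : η / τ * τ = η := div_mul_cancel₀ η hτ.ne'
  refine ⟨ρ, hρ, hρb', η / τ, div_pos hη hτ, τ, ⟨hτ, hτT⟩, hρF.le, ?_, ?_, ?_,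
    fun t ht => ⟨?_, (hτu t ht).2.trans ?_⟩⟩
  · exact hcτ.symm ▸ hηρ.le
  · rw [← mul_div_assoc, le_div_iff₀ hτ]
    exact hτF.le
  · rw [div_mul_eq_mul_div, le_div_iff₀ hτ]
    exact hτρ.le
  · exact hcτ.symm ▸ (hτu t ht).1.le
  · calc (F + 2) * t ≤ (F + 2) * τ := by gcongr; exact ht.2
      _ ≤ α / (4 * (η / τ)) := by
        rw [le_div_iff₀ (by positivity)]
        calc (F + 2) * τ * (4 * (η / τ)) = 4 * (F + 2) * η := by field_simp
          _ ≤ α := hηα.le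

theorem exists_boundary_slope_lt (h : IsFreeBoundarySubsolution T b F u s ux uxx ut) (hT : 0 < T)
    {α : ℝ} (hα : 0 < α) (hF : 0 < F) (hb : s 0 < b) :
    ∃ t ∈ Ioo 0 T, ∀ β, HasDerivWithinAt (fun x => u x t) β (Ici (s t)) (s t) → β < α := by
  obtain ⟨ρ, hρ, hρb, c, hc, τ, ⟨hτ, hτT⟩, hρF, hcτ, hFc, hcρ, hbounds⟩ :=
    h.exists_barrier_scales hT hα hF.le hb
  obtain ⟨t₁, ht₁, m, ⟨hle_m, hm_le⟩, htouch, hline⟩ := exists_touching_line hτ hc.le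
    (h.continuousOn_boundary.mono (Icc_subset_Ico_right hτT)) fun t ht => (hbounds t ht).1
  have ht₁' : t₁ ∈ Icc 0 τ := Ioc_subset_Icc_self ht₁
  have hlength : F * (s 0 + ρ - m) ≤ F * (2 * ρ) := by
    gcongr
    linarith
  have hwidth : c * (ρ / 2) ≤ c * (s 0 + ρ - (m + c * τ)) := by
    gcongr
    linarith
  have hbelow := h.le_travelingBarrier hα.le hF.le hc hτT hρb.le hline hFc (by linarith)
    (by linarith) fun t ht => (hbounds t ht).2
  have hst₁ : s t₁ < s 0 + ρ := by linarith [le_of_abs_le (hbounds t₁ ht₁').1]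
  have ht₁T : t₁ ∈ Ioo 0 T := Ioc_subset_Ioo_right hτT ht₁
  refine ⟨t₁, ht₁T, fun β hβ => ?_⟩
  calc β ≤ α - F / c := h.boundary_slope_le hc.ne' ht₁T htouch hst₁ (hbelow t₁ ht₁') hβ
    _ < α := sub_lt_self α (div_pos hF hc)

end IsFreeBoundarySubsolution

theorem le_abs_mul_exp_of_mul_exp_neg_le {lam M y x R : ℝ} (hlam : 0 ≤ lam)
    (hy : y * Real.exp (-lam * x) ≤ M) (hx : x ≤ R) : y ≤ |M| * Real.exp (lam * R) :=
  calc y = y * Real.exp (-lam * x) * Real.exp (lam * x) := by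
        rw [mul_assoc, ← Real.exp_add, neg_mul, neg_add_cancel, Real.exp_zero, mul_one]
    _ ≤ |M| * Real.exp (lam * R) := by
        gcongr
        exact hy.trans (le_abs_self M)

theorem isFreeBoundarySubsolution_of_mul_exp_neg_le {T lam M : ℝ} {f u ux uxx : ℝ → ℝ → ℝ}
    {s : ℝ → ℝ} (hlam : 0 ≤ lam)
    (hf : ∀ x : ℝ, ∀ t ∈ Ioo 0 T, f x t * Real.exp (-lam * x) ≤ M) (hs : ContinuousOn s (Ico 0 T))
    (hu : ∀ t ∈ Ioo 0 T, ∀ x : ℝ, s t < x →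
      HasDerivAt (fun ξ => u ξ t) (ux x t) x ∧ HasDerivAt (fun ξ => ux ξ t) (uxx x t) x ∧
        HasDerivAt (fun τ => u x τ) (uxx x t + f x t) t)
    (huc : ContinuousOn (fun p : ℝ × ℝ => u p.1 p.2) {p : ℝ × ℝ | p.2 ∈ Ico 0 T ∧ s p.2 ≤ p.1})
    (hboundary : ∀ t ∈ Ioo 0 T, u (s t) t = 0) (hinit : ∀ x, s 0 ≤ x → u x 0 ≤ 0) (b : ℝ) :
    IsFreeBoundarySubsolution T b (|M| * Real.exp (lam * b)) u s ux uxx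
      fun x t => uxx x t + f x t where
  continuousOn_boundary := hs
  continuousOn := huc.mono fun _ hp => ⟨hp.1, hp.2.1⟩
  hasHeatDerivAt t ht x hx :=
    have ⟨hspace, hspace₂, htime⟩ := hu t ht x hx.1
    ⟨hspace, hspace₂, htime⟩
  heat_le t ht x hx := (add_sub_cancel_left _ _).trans_le
    (le_abs_mul_exp_of_mul_exp_neg_le hlam (hf x t ht) hx.2.le)
  boundary_eq_zero := hboundary
  initial_nonpos x hx := hinit x hx.1

theorem hasDerivWithinAt_lateralBoundary {I J : Set ℝ} {t : ℝ} {u ux : ℝ → ℝ → ℝ} {s : ℝ → ℝ}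
    (hI : t ∈ I) (hJ : t ∈ J)
    (hu : ContinuousOn (fun p : ℝ × ℝ => u p.1 p.2) {p : ℝ × ℝ | p.2 ∈ I ∧ s p.2 ≤ p.1})
    (hux : ContinuousOn (fun p : ℝ × ℝ => ux p.1 p.2) {p : ℝ × ℝ | p.2 ∈ J ∧ s p.2 ≤ p.1})
    (hderiv : ∀ x, s t < x → HasDerivAt (fun ξ => u ξ t) (ux x t) x) :
    HasDerivWithinAt (fun x => u x t) (ux (s t) t) (Ici (s t)) (s t) := by
  have hslice : ContinuousOn (fun x : ℝ => (x, t)) (Ici (s t)) := by fun_prop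
  have hu' : ContinuousOn (fun x => u x t) (Ici (s t)) := hu.comp hslice fun x hx => ⟨hI, hx⟩
  have hux' : ContinuousOn (fun x => ux x t) (Ici (s t)) := hux.comp hslice fun x hx => ⟨hJ, hx⟩
  exact hasDerivWithinAt_Ici_of_continuousWithinAt (hu' _ self_mem_Ici) hderiv
    (hux' _ self_mem_Ici)

theorem no_new_phase_one_dimensional_exponential_growth_general {T b F α : ℝ}
    {u ux uxx ut : ℝ → ℝ → ℝ} {s : ℝ → ℝ} (hT : 0 < T) (hα : 0 < α) (hb : s 0 < b)
    (h : IsFreeBoundarySubsolution T b F u s ux uxx ut) :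
    ¬ ∀ t ∈ Ioo 0 T, ∃ β ≥ α, HasDerivWithinAt (fun x => u x t) β (Ici (s t)) (s t) := by
  intro hslope
  obtain ⟨t, ht, hlt⟩ := (h.mono (le_max_left F 1)).exists_boundary_slope_lt hT hα
    (zero_lt_one.trans_le (le_max_right F 1)) hb
  obtain ⟨β, hβα, hβ⟩ := hslope t ht
  exact hβα.not_gt (hlt β hβ)

end FreeBoundary

/-- **No formation of a new phase, one-dimensional case with exponential growth.**
For `N = 1`, `T > 0`, `α > 0`, `lam₀ > 0`, a non-negative measurable heat source `f` with
`sup_x f x t * exp (-lam₀ x)` bounded from above on `(0,T)`, and any initial free boundary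
location `s₀`, there is no pair `(u, s)` such that `s` is continuous on `[0,T)`,
continuously differentiable on `(0,T)` with `s 0 = s₀`, and `u` is a non-negative
classical solution of `∂ₜu - ∂ₓ²u = f` on the moving domain `{x > s t, 0 < t < T}` with
`sup u(x,t) exp (-lam₀ x) < ∞`, continuous together with `∂ₓu` up to the free boundary,
with `u(s t, t) = 0`, `∂ₓu(s t, t) = α`, continuous up to `t = 0` with `u(·,0) ≡ 0`. -/
theorem no_new_phase_one_dimensional_exponential_growth
    (T α lam₀ : ℝ) (hT : 0 < T) (hα : 0 < α) (hlam₀ : 0 < lam₀)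
    (f : ℝ → ℝ → ℝ)
    (hf_nonneg : ∀ x : ℝ, ∀ t ∈ Ioo 0 T, 0 ≤ f x t)
    (hf_grow : ∃ M : ℝ, ∀ x : ℝ, ∀ t ∈ Ioo 0 T, f x t * Real.exp (-lam₀ * x) ≤ M)
    (hf_meas : Measurable fun p : ℝ × ℝ => f p.1 p.2)
    (s₀ : ℝ) :
    ¬ ∃ (u : ℝ → ℝ → ℝ) (s : ℝ → ℝ) (ux uxx : ℝ → ℝ → ℝ),
      -- regularity of the free boundary
      ContinuousOn s (Ico 0 T) ∧
      (∀ t ∈ Ioo 0 T, DifferentiableAt ℝ s t) ∧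
      ContinuousOn (deriv s) (Ioo 0 T) ∧
      s 0 = s₀ ∧
      -- u is a classical solution of the heat equation ∂ₜ u - ∂ₓ² u = f in the moving domain
      (∀ t ∈ Ioo 0 T, ∀ x : ℝ, s t < x →
        HasDerivAt (fun ξ => u ξ t) (ux x t) x ∧
        HasDerivAt (fun ξ => ux ξ t) (uxx x t) x ∧
        HasDerivAt (fun τ => u x τ) (uxx x t + f x t) t) ∧
      -- u is non-negative on the closed moving domain
      (∀ t ∈ Ico 0 T, ∀ x : ℝ, s t ≤ x → 0 ≤ u x t) ∧
      -- exponential growth bound for u: sup_{x, 0<t<T} u(x,t) e^{-lam₀ x} < ∞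
      (∃ M : ℝ, ∀ t ∈ Ioo 0 T, ∀ x : ℝ, s t ≤ x → u x t * Real.exp (-lam₀ * x) ≤ M) ∧
      -- u is continuous up to the free boundary and up to t = 0
      ContinuousOn (fun p : ℝ × ℝ => u p.1 p.2)
        {p : ℝ × ℝ | p.2 ∈ Ico 0 T ∧ s p.2 ≤ p.1} ∧
      -- ∂ₓ u is continuous up to the free boundary
      ContinuousOn (fun p : ℝ × ℝ => ux p.1 p.2)
        {p : ℝ × ℝ | p.2 ∈ Ioo 0 T ∧ s p.2 ≤ p.1} ∧
      -- Dirichlet boundary condition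
      (∀ t ∈ Ioo 0 T, u (s t) t = 0) ∧
      -- fixed normal derivative (Neumann) condition ∂u/∂ν = -α, i.e. ∂ₓu = α at x = s t
      (∀ t ∈ Ioo 0 T, ux (s t) t = α) ∧
      -- zero initial value on [s₀, ∞)
      (∀ x : ℝ, s₀ ≤ x → u x 0 = 0) := by
  rintro ⟨u, s, ux, uxx, hs, -, -, rfl, hu, -, -, huc, huxc, hud, hun, hui⟩
  obtain ⟨M, hM⟩ := hf_grow
  exact no_new_phase_one_dimensional_exponential_growth_general hT hα (lt_add_one (s 0))
    (isFreeBoundarySubsolution_of_mul_exp_neg_le hlam₀.le hM hs hu huc hud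
      (fun x hx => (hui x hx).le) (s 0 + 1))
    fun t ht => ⟨α, le_rfl, hun t ht ▸ hasDerivWithinAt_lateralBoundary
      (Ioo_subset_Ico_self ht) ht huc huxc fun x hx => (hu t ht x hx).1⟩
end

section
/- Let α > 0 and h > 0. Consider the free boundary problem ∂_t u − ∂_x² u = h/√t on {(x,t) : x > s(t), 0 < t < T}, u(s(t),t) = 0, ∂_x u(s(t),t) = α, with initial domain D_0 = (0,∞) and initial value u(·,0) ≡ 0. Then there exists a unique bounded solution of self-similar form u(x,t) = √t · w(x/√t), s(t) = σ√t with a constant σ ∈ ℝ and w bounded. Moreover, the map h ↦ σ(h) is strictly decreasing and smooth, σ(α/√π) = 0, and σ(h) < 0 if and only if h > α/√π, while σ(h) > 0 if and only if h < α/√π. -/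
set_option autoImplicit false

open Set Filter

/-- The self-similar ansatz `u(x,t) = √t · w(x/√t)`. -/
noncomputable def selfSimilarU (w : ℝ → ℝ) (x t : ℝ) : ℝ :=
  Real.sqrt t * w (x / Real.sqrt t)

/-- `(u, s)` with `u(x,t) = √t·w(x/√t)`, `s(t) = σ√t` is a bounded non-negative solution
of the free boundary problem `∂ₜu - ∂ₓ²u = h/√t` on `{x > s t, t > 0}`, `u(s t, t) = 0`,
`∂ₓu(s t, t) = α` (one-sided), with initial domain `(0,∞)` and zero initial value. -/
def IsSelfSimilarSolution (α h σ : ℝ) (w : ℝ → ℝ) : Prop :=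
  -- w (hence u) is bounded
  (∃ M : ℝ, ∀ y : ℝ, σ ≤ y → |w y| ≤ M) ∧
  -- u is a classical solution of ∂ₜ u - ∂ₓ² u = h/√t for x > σ√t, t > 0
  (∀ t : ℝ, 0 < t → ∀ x : ℝ, σ * Real.sqrt t < x →
    DifferentiableAt ℝ (fun ξ => selfSimilarU w ξ t) x ∧
    DifferentiableAt ℝ (deriv (fun ξ => selfSimilarU w ξ t)) x ∧
    HasDerivAt (fun τ => selfSimilarU w x τ)
      (deriv (deriv (fun ξ => selfSimilarU w ξ t)) x + h / Real.sqrt t) t) ∧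
  -- u is non-negative on the closed moving domain
  (∀ t : ℝ, 0 < t → ∀ x : ℝ, σ * Real.sqrt t ≤ x → 0 ≤ selfSimilarU w x t) ∧
  -- Dirichlet condition u(s t, t) = 0
  (∀ t : ℝ, 0 < t → selfSimilarU w (σ * Real.sqrt t) t = 0) ∧
  -- Neumann condition ∂ₓu(s t, t) = α (one-sided spatial derivative)
  (∀ t : ℝ, 0 < t →
    derivWithin (fun ξ => selfSimilarU w ξ t) (Ici (σ * Real.sqrt t)) (σ * Real.sqrt t)
      = α) ∧
  -- zero initial value, attained uniformly as t ↓ 0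
  (∀ ε > 0, ∃ δ > 0, ∀ t : ℝ, 0 < t → t < δ → ∀ x : ℝ, σ * Real.sqrt t ≤ x →
    |selfSimilarU w x t| ≤ ε)

/-!
In the variable `y = x / √t` the problem becomes `w / 2 - y / 2 * w' - w'' = h` on `(σ, ∞)` with
`w σ = 0` and `w' σ = α`. The homogeneous equation is solved by `y` and by the second iterated
integral `I₂` of the Gaussian `I₀ y = exp (-y ^ 2 / 4)`, so a bounded solution is `2 * h + b * I₂`,
and the two boundary conditions amount to `2 * h * I₁ σ = α * I₂ σ`, where `I₁ = -I₂'`. Everything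
then follows from `log (I₁ / I₂)` being a diffeomorphism of `ℝ`; its derivative is positive by the
Turán-type inequality `I₂ * I₀ < I₁ ^ 2`.
-/

open Topology MeasureTheory

theorem lt_of_hasDerivAt_neg_of_tendsto {f f' : ℝ → ℝ} {a l : ℝ}
    (hf : ∀ y, a ≤ y → HasDerivAt f (f' y) y) (hf' : ∀ y, a < y → f' y < 0)
    (hl : Tendsto f atTop (𝓝 l)) : l < f a := by
  have hanti : StrictAntiOn f (Ici a) := by
    refine strictAntiOn_of_hasDerivWithinAt_neg (f' := f') (convex_Ici a)
      (fun y hy => (hf y hy).continuousAt.continuousWithinAt) (fun y hy => ?_) (fun y hy => ?_)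
    · exact (hf y (interior_subset hy)).hasDerivWithinAt
    · exact hf' y (by simpa using hy)
  have hl_le : l ≤ f (a + 1) := by
    refine le_of_tendsto hl ?_
    filter_upwards [eventually_ge_atTop (a + 1)] with y hy
    exact hanti.antitoneOn (by simp) (mem_Ici.2 (by linarith)) hy
  exact hl_le.trans_lt (hanti self_mem_Ici (by simp) (by simp))

/-- The Gaussian `exp (-y ^ 2 / 4)` and its iterated integrals over `(y, ∞)`, i.e. up to
normalization the repeated integrals of the complementary error function. From index two on they
are encoded by their three-term recurrence, which makes decay and smoothness immediate;
`hasDerivAt_gaussianTail_succ` shows that each is the iterated integral of the previous one. -/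
noncomputable def gaussianTail : ℕ → ℝ → ℝ
  | 0, y => Real.exp (-(1 / 4) * y ^ 2)
  | 1, y => ∫ x in Ioi y, Real.exp (-(1 / 4) * x ^ 2)
  | n + 2, y => (2 * gaussianTail n y - y * gaussianTail (n + 1) y) / (n + 1)

theorem gaussianTail_two (y : ℝ) :
    gaussianTail 2 y = 2 * gaussianTail 0 y - y * gaussianTail 1 y := by
  simp [gaussianTail]

theorem hasDerivAt_gaussianTail_zero (y : ℝ) :
    HasDerivAt (gaussianTail 0) (-(y / 2) * gaussianTail 0 y) y := by
  simp only [gaussianTail]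
  exact (((hasDerivAt_pow 2 y).const_mul (-(1 / 4))).exp).congr_deriv (by ring)

theorem integrable_gaussianTail_zero : Integrable (gaussianTail 0) := by
  simpa only [gaussianTail] using integrable_exp_neg_mul_sq (by norm_num : (0 : ℝ) < 1 / 4)

theorem hasDerivAt_gaussianTail_one (y : ℝ) :
    HasDerivAt (gaussianTail 1) (-gaussianTail 0 y) y := by
  have hcont : Continuous (gaussianTail 0) :=
    continuous_iff_continuousAt.2 fun y => (hasDerivAt_gaussianTail_zero y).continuousAt
  have hsplit : gaussianTail 1 =
      fun y => gaussianTail 1 0 - ∫ x in (0 : ℝ)..y, gaussianTail 0 x := by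
    funext y
    have := intervalIntegral.integral_Ioi_sub_Ioi'
      (integrable_gaussianTail_zero.integrableOn (s := Ioi 0))
      (integrable_gaussianTail_zero.integrableOn (s := Ioi y))
    rw [← this]
    exact (sub_sub_cancel _ _).symm
  rw [hsplit]
  exact (hcont.integral_hasStrictDerivAt 0 y).hasDerivAt.const_sub _

theorem hasDerivAt_gaussianTail_succ (n : ℕ) (y : ℝ) :
    HasDerivAt (gaussianTail (n + 1)) (-gaussianTail n y) y := by
  induction n using Nat.twoStepInduction with
  | zero => exact hasDerivAt_gaussianTail_one y
  | one =>
    have := (((hasDerivAt_gaussianTail_zero y).const_mul 2).sub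
      ((hasDerivAt_id y).mul (hasDerivAt_gaussianTail_one y)))
    refine (this.congr_of_eventuallyEq (.of_forall gaussianTail_two)).congr_deriv ?_
    simp only [id]
    ring
  | more n ih₀ ih₁ =>
    have := ((ih₀.const_mul 2).sub ((hasDerivAt_id y).mul ih₁)).div_const ((n + 1 : ℕ) + 1 : ℝ)
    refine (this.congr_of_eventuallyEq (.of_forall fun _ => rfl)).congr_deriv ?_
    have : (n : ℝ) + 1 ≠ 0 := by positivity
    have : (n : ℝ) + 1 + 1 ≠ 0 := by positivity
    simp only [id, gaussianTail]
    push_cast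
    field_simp
    ring

theorem contDiff_gaussianTail (n : ℕ) : ContDiff ℝ (⊤ : ℕ∞) (gaussianTail n) := by
  induction n with
  | zero =>
    simp only [gaussianTail]
    fun_prop
  | succ n ih =>
    refine contDiff_infty_iff_deriv.2
      ⟨fun y => (hasDerivAt_gaussianTail_succ n y).differentiableAt, ?_⟩
    rw [funext fun y => (hasDerivAt_gaussianTail_succ n y).deriv]
    exact ih.neg

theorem tendsto_pow_mul_gaussianTail_zero (k : ℕ) :
    Tendsto (fun y => y ^ k * gaussianTail 0 y) atTop (𝓝 0) := by
  simp only [gaussianTail]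
  exact ((Asymptotics.isBigO_refl (fun y : ℝ => y ^ k) atTop).mul
    (exp_neg_mul_sq_isLittleO_exp_neg (by norm_num)).isBigO).trans_tendsto
    (Real.tendsto_pow_mul_exp_neg_atTop_nhds_zero k)

theorem tendsto_gaussianTail_one : Tendsto (gaussianTail 1) atTop (𝓝 0) :=
  tendsto_integral_Ioi_zero tendsto_id

theorem gaussianTail_one_lt_gaussianTail_zero {y : ℝ} (hy : 2 ≤ y) :
    gaussianTail 1 y < gaussianTail 0 y := by
  refine sub_pos.1 (lt_of_hasDerivAt_neg_of_tendsto
    (f := fun y => gaussianTail 0 y - gaussianTail 1 y)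
    (fun z _ => (hasDerivAt_gaussianTail_zero z).sub (hasDerivAt_gaussianTail_one z))
    (fun z hz => ?_) ?_)
  · have : 0 < gaussianTail 0 z := by simp only [gaussianTail]; positivity
    nlinarith
  · simpa using (tendsto_pow_mul_gaussianTail_zero 0).sub tendsto_gaussianTail_one

theorem tendsto_pow_mul_gaussianTail (n k : ℕ) :
    Tendsto (fun y => y ^ k * gaussianTail n y) atTop (𝓝 0) := by
  induction n using Nat.twoStepInduction generalizing k with
  | zero => exact tendsto_pow_mul_gaussianTail_zero k
  | one =>
    refine squeeze_zero' ?_ ?_ (tendsto_pow_mul_gaussianTail_zero k)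
    · filter_upwards [eventually_ge_atTop 0] with y hy
      exact mul_nonneg (pow_nonneg hy k) (integral_nonneg fun x => (Real.exp_pos _).le)
    · filter_upwards [eventually_ge_atTop 2] with y hy
      have := (gaussianTail_one_lt_gaussianTail_zero hy).le
      gcongr
  | more n ih₀ ih₁ =>
    have := (((ih₀ k).const_mul 2).sub (ih₁ (k + 1))).div_const (n + 1 : ℝ)
    simp only [mul_zero, sub_zero, zero_div] at this
    refine this.congr fun y => ?_
    simp only [gaussianTail]
    ring

theorem tendsto_gaussianTail (n : ℕ) : Tendsto (gaussianTail n) atTop (𝓝 0) := by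
  simpa using tendsto_pow_mul_gaussianTail n 0

theorem gaussianTail_pos (n : ℕ) (y : ℝ) : 0 < gaussianTail n y := by
  induction n generalizing y with
  | zero => exact Real.exp_pos _
  | succ n ih =>
    exact lt_of_hasDerivAt_neg_of_tendsto (fun z _ => hasDerivAt_gaussianTail_succ n z)
      (fun z _ => neg_neg_of_pos (ih z)) (tendsto_gaussianTail (n + 1))

theorem strictAnti_gaussianTail_succ (n : ℕ) : StrictAnti (gaussianTail (n + 1)) :=
  strictAnti_of_hasDerivAt_neg (hasDerivAt_gaussianTail_succ n)
    fun y => neg_neg_of_pos (gaussianTail_pos n y)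

theorem mul_gaussianTail_succ_lt (n : ℕ) (y : ℝ) :
    y * gaussianTail (n + 1) y < 2 * gaussianTail n y := by
  have : 0 < (2 * gaussianTail n y - y * gaussianTail (n + 1) y) / (n + 1) :=
    gaussianTail_pos (n + 2) y
  rwa [lt_div_iff₀ (by positivity), zero_mul, sub_pos] at this

theorem gaussianTail_two_mul_gaussianTail_zero_lt (y : ℝ) :
    gaussianTail 2 y * gaussianTail 0 y < gaussianTail 1 y ^ 2 := by
  refine sub_pos.1 (lt_of_hasDerivAt_neg_of_tendsto
    (f := fun y => gaussianTail 1 y ^ 2 - gaussianTail 2 y * gaussianTail 0 y)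
    (f' := fun y =>
      -(gaussianTail 0 y * (2 * gaussianTail 1 y - y * gaussianTail 2 y) / 2))
    (fun z _ => ?_) (fun z _ => ?_) ?_)
  · refine (((hasDerivAt_gaussianTail_succ 0 z).pow 2).sub
      ((hasDerivAt_gaussianTail_succ 1 z).mul (hasDerivAt_gaussianTail_zero z))).congr_deriv ?_
    simp only [zero_add, one_add_one_eq_two]
    ring
  · have := mul_pos (gaussianTail_pos 0 z) (sub_pos.2 (mul_gaussianTail_succ_lt 1 z))
    linarith
  · simpa using ((tendsto_gaussianTail 1).pow 2).sub
      ((tendsto_gaussianTail 2).mul (tendsto_gaussianTail 0))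

theorem gaussianTail_one_zero : gaussianTail 1 0 = √Real.pi := by
  rw [gaussianTail, integral_gaussian_Ioi, show Real.pi / (1 / 4) = 2 ^ 2 * Real.pi by ring,
    Real.sqrt_mul (by norm_num), Real.sqrt_sq (by norm_num)]
  ring

theorem gaussianTail_two_zero : gaussianTail 2 0 = 2 := by
  simp [gaussianTail]

/-- The logarithm of `I₁ / I₂`. The free boundary of a self-similar solution sits at the point
where it takes the value `log (α / (2 * h))`. -/
noncomputable def logTailRatio (y : ℝ) : ℝ :=
  Real.log (gaussianTail 1 y / gaussianTail 2 y)

theorem gaussianTail_ratio_pos (y : ℝ) : 0 < gaussianTail 1 y / gaussianTail 2 y :=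
  div_pos (gaussianTail_pos 1 y) (gaussianTail_pos 2 y)

theorem contDiff_logTailRatio : ContDiff ℝ (⊤ : ℕ∞) logTailRatio :=
  ((contDiff_gaussianTail 1).div (contDiff_gaussianTail 2) fun y => (gaussianTail_pos 2 y).ne').log
    fun y => (gaussianTail_ratio_pos y).ne'

theorem hasDerivAt_logTailRatio (y : ℝ) :
    HasDerivAt logTailRatio ((gaussianTail 1 y ^ 2 - gaussianTail 2 y * gaussianTail 0 y) /
      (gaussianTail 1 y * gaussianTail 2 y)) y := by
  have h₁ := (gaussianTail_pos 1 y).ne'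
  have h₂ := (gaussianTail_pos 2 y).ne'
  refine (((hasDerivAt_gaussianTail_succ 0 y).div (hasDerivAt_gaussianTail_succ 1 y) h₂).log
    (gaussianTail_ratio_pos y).ne').congr_deriv ?_
  simp only [zero_add, one_add_one_eq_two, Pi.div_apply]
  field_simp
  ring

theorem deriv_logTailRatio_pos (y : ℝ) :
    0 < (gaussianTail 1 y ^ 2 - gaussianTail 2 y * gaussianTail 0 y) /
      (gaussianTail 1 y * gaussianTail 2 y) :=
  div_pos (sub_pos.2 (gaussianTail_two_mul_gaussianTail_zero_lt y))
    (mul_pos (gaussianTail_pos 1 y) (gaussianTail_pos 2 y))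

theorem strictMono_logTailRatio : StrictMono logTailRatio :=
  strictMono_of_hasDerivAt_pos hasDerivAt_logTailRatio deriv_logTailRatio_pos

theorem tendsto_logTailRatio_atTop : Tendsto logTailRatio atTop atTop := by
  have hlog : Tendsto (fun y : ℝ => Real.log (y / 2)) atTop atTop :=
    Real.tendsto_log_atTop.comp (tendsto_id.atTop_div_const two_pos)
  refine tendsto_atTop_mono' _ ?_ hlog
  filter_upwards [eventually_gt_atTop 0] with y hy
  refine Real.log_le_log (by positivity) ?_
  rw [le_div_iff₀ (gaussianTail_pos 2 y)]
  linarith [mul_gaussianTail_succ_lt 1 y]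

theorem tendsto_logTailRatio_atBot : Tendsto logTailRatio atBot atBot := by
  have hlog : Tendsto (fun y : ℝ => -Real.log (-y)) atBot atBot :=
    tendsto_neg_atTop_atBot.comp (Real.tendsto_log_atTop.comp tendsto_neg_atBot_atTop)
  refine tendsto_atBot_mono' _ ?_ hlog
  filter_upwards [eventually_lt_atBot 0] with y hy
  rw [← Real.log_inv]
  refine Real.log_le_log (gaussianTail_ratio_pos y) ?_
  rw [div_le_iff₀ (gaussianTail_pos 2 y), inv_mul_eq_div, le_div_iff₀ (neg_pos.2 hy)]
  linarith [gaussianTail_two y, gaussianTail_pos 0 y]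

/-- `logTailRatio` as an order automorphism of `ℝ`, giving access to its inverse. -/
noncomputable def logTailRatioIso : ℝ ≃o ℝ :=
  strictMono_logTailRatio.orderIsoOfSurjective logTailRatio
    (contDiff_logTailRatio.continuous.surjective tendsto_logTailRatio_atTop
      tendsto_logTailRatio_atBot)

theorem contDiff_logTailRatioIso_symm : ContDiff ℝ (⊤ : ℕ∞) logTailRatioIso.symm :=
  logTailRatioIso.toHomeomorph.contDiff_symm_deriv (fun y => (deriv_logTailRatio_pos y).ne')
    hasDerivAt_logTailRatio contDiff_logTailRatio

/-- The coefficient `σ(h)` of the free boundary `s t = σ(h) * √t`. -/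
noncomputable def freeBoundaryCoeff (α h : ℝ) : ℝ :=
  logTailRatioIso.symm (Real.log (α / (2 * h)))

theorem eq_freeBoundaryCoeff_iff {α h σ : ℝ} (hα : 0 < α) (hh : 0 < h) :
    σ = freeBoundaryCoeff α h ↔ 2 * h * gaussianTail 1 σ = α * gaussianTail 2 σ := by
  have hdiv : 0 < α / (2 * h) := by positivity
  rw [freeBoundaryCoeff, OrderIso.eq_symm_apply]
  change Real.log _ = _ ↔ _
  rw [Real.log_injOn_pos.eq_iff (gaussianTail_ratio_pos σ) hdiv,
    div_eq_div_iff (gaussianTail_pos 2 σ).ne' (by positivity), mul_comm (gaussianTail 1 σ)]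

theorem strictAntiOn_freeBoundaryCoeff {α : ℝ} (hα : 0 < α) :
    StrictAntiOn (freeBoundaryCoeff α) (Ioi 0) := by
  intro a ha b hb hab
  rw [mem_Ioi] at ha hb
  exact logTailRatioIso.symm.strictMono (Real.log_lt_log (by positivity) (by gcongr))

theorem contDiffOn_freeBoundaryCoeff {α : ℝ} (hα : α ≠ 0) :
    ContDiffOn ℝ (⊤ : ℕ∞) (freeBoundaryCoeff α) (Ioi 0) := by
  have hne : ∀ h ∈ Ioi (0 : ℝ), 2 * h ≠ 0 := fun h hh => (mul_pos two_pos hh).ne'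
  exact contDiff_logTailRatioIso_symm.comp_contDiffOn
    ((contDiffOn_const.div (contDiffOn_const.mul contDiffOn_id) hne).log
      fun h hh => div_ne_zero hα (hne h hh))

theorem freeBoundaryCoeff_div_sqrt_pi {α : ℝ} (hα : 0 < α) :
    freeBoundaryCoeff α (α / √Real.pi) = 0 := by
  have hpi : 0 < √Real.pi := Real.sqrt_pos.2 Real.pi_pos
  refine ((eq_freeBoundaryCoeff_iff hα (div_pos hα hpi)).2 ?_).symm
  rw [gaussianTail_one_zero, gaussianTail_two_zero]
  field_simp

/-- The equation `w / 2 - y / 2 * w' - w'' = h` on `s`, in the classical sense. -/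
def SolvesHermiteOn (h : ℝ) (s : Set ℝ) (w : ℝ → ℝ) : Prop :=
  ∀ y ∈ s, DifferentiableAt ℝ w y ∧ DifferentiableAt ℝ (deriv w) y ∧
    w y / 2 - y / 2 * deriv w y - deriv (deriv w) y = h

/-- The general solution of the Hermite-type equation with source `h`. -/
noncomputable def hermiteSolution (h a b y : ℝ) : ℝ :=
  2 * h + a * y + b * gaussianTail 2 y

theorem hasDerivAt_hermiteSolution (h a b y : ℝ) :
    HasDerivAt (hermiteSolution h a b) (a - b * gaussianTail 1 y) y :=
  ((((hasDerivAt_id y).const_mul a).const_add (2 * h)).add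
    ((hasDerivAt_gaussianTail_succ 1 y).const_mul b)).congr_deriv (by ring)

theorem deriv_hermiteSolution (h a b : ℝ) :
    deriv (hermiteSolution h a b) = fun y => a - b * gaussianTail 1 y :=
  funext fun y => (hasDerivAt_hermiteSolution h a b y).deriv

theorem solvesHermiteOn_hermiteSolution (h a b : ℝ) (s : Set ℝ) :
    SolvesHermiteOn h s (hermiteSolution h a b) := by
  intro y _
  have hderiv₂ : HasDerivAt (deriv (hermiteSolution h a b)) (b * gaussianTail 0 y) y := by
    rw [deriv_hermiteSolution]
    exact (((hasDerivAt_gaussianTail_succ 0 y).const_mul b).const_sub a).congr_deriv (by ring)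
  refine ⟨(hasDerivAt_hermiteSolution h a b y).differentiableAt, hderiv₂.differentiableAt, ?_⟩
  rw [hderiv₂.deriv, deriv_hermiteSolution, hermiteSolution, gaussianTail_two]
  ring

theorem SolvesHermiteOn.sub_const {h : ℝ} {s : Set ℝ} {w : ℝ → ℝ} (hw : SolvesHermiteOn h s w) :
    SolvesHermiteOn 0 s (fun y => w y - 2 * h) := by
  have hderiv : deriv (fun y => w y - 2 * h) = deriv w := funext fun y => deriv_sub_const _
  intro y hy
  obtain ⟨hd, hd₂, hode⟩ := hw y hy
  refine ⟨hd.sub_const _, hderiv ▸ hd₂, ?_⟩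
  rw [hderiv]
  linarith

theorem SolvesHermiteOn.exists_wronskian_eq {s : Set ℝ} {u v : ℝ → ℝ} (hs : IsOpen s)
    (hs' : IsPreconnected s) (hu : SolvesHermiteOn 0 s u) (hv : SolvesHermiteOn 0 s v) :
    ∃ c, ∀ y ∈ s, deriv u y * v y - u y * deriv v y = c * gaussianTail 0 y := by
  -- Abel's identity: the Wronskian, like the Gaussian, solves `W' = -(y / 2) * W`.
  have hquot : ∀ y ∈ s, HasDerivAt
      (fun y => (deriv u y * v y - u y * deriv v y) / gaussianTail 0 y) 0 y := by
    intro y hy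
    obtain ⟨hu₁, hu₂, hu_ode⟩ := hu y hy
    obtain ⟨hv₁, hv₂, hv_ode⟩ := hv y hy
    have hne := (gaussianTail_pos 0 y).ne'
    refine (((hu₂.hasDerivAt.mul hv₁.hasDerivAt).sub (hu₁.hasDerivAt.mul hv₂.hasDerivAt)).div
      (hasDerivAt_gaussianTail_zero y) hne).congr_deriv ?_
    rw [div_eq_zero_iff]
    left
    simp only [Pi.sub_apply, Pi.mul_apply]
    linear_combination gaussianTail 0 y * (u y * hv_ode - v y * hu_ode)
  obtain ⟨c, hc⟩ := hs.exists_is_const_of_deriv_eq_zero hs'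
    (fun y hy => (hquot y hy).differentiableAt.differentiableWithinAt)
    (fun y hy => (hquot y hy).deriv)
  exact ⟨c, fun y hy => (div_eq_iff (gaussianTail_pos 0 y).ne').1 (hc y hy)⟩

theorem SolvesHermiteOn.exists_eqOn_hermiteSolution {h : ℝ} {s : Set ℝ} {w : ℝ → ℝ}
    (hs : IsOpen s) (hs' : IsPreconnected s) (hw : SolvesHermiteOn h s w) :
    ∃ a b, EqOn w (hermiteSolution h a b) s := by
  obtain ⟨A, hA⟩ := hw.sub_const.exists_wronskian_eq hs hs'
    (solvesHermiteOn_hermiteSolution 0 0 1 s)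
  obtain ⟨B, hB⟩ := hw.sub_const.exists_wronskian_eq hs hs'
    (solvesHermiteOn_hermiteSolution 0 1 0 s)
  refine ⟨A / 2, -B / 2, fun y hy => ?_⟩
  have hAy := hA y hy
  have hBy := hB y hy
  simp only [deriv_hermiteSolution, hermiteSolution] at hAy hBy ⊢
  refine mul_left_cancel₀ (gaussianTail_pos 0 y).ne' ?_
  linear_combination y / 2 * hAy - gaussianTail 2 y / 2 * hBy -
    (w y - 2 * h) / 2 * gaussianTail_two y

theorem eq_zero_of_hermiteSolution_bounded {h a b M : ℝ}
    (hM : ∀ᶠ y in atTop, |hermiteSolution h a b y| ≤ M) : a = 0 := by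
  have hinv : Tendsto (fun y : ℝ => y⁻¹) atTop (𝓝 0) := tendsto_inv_atTop_zero
  have hslope : Tendsto (fun y => hermiteSolution h a b y * y⁻¹) atTop (𝓝 a) := by
    have hlim : Tendsto (fun y => a + (2 * h + b * gaussianTail 2 y) * y⁻¹) atTop (𝓝 a) := by
      simpa using ((((tendsto_gaussianTail 2).const_mul b).const_add (2 * h)).mul hinv).const_add a
    refine hlim.congr' ?_
    filter_upwards [eventually_ne_atTop 0] with y hy
    rw [hermiteSolution]
    field_simp
    ring
  exact tendsto_nhds_unique hslope (bdd_le_mul_tendsto_zero' M hM hinv)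

theorem selfSimilarU_one (w : ℝ → ℝ) (x : ℝ) : selfSimilarU w x 1 = w x := by
  simp [selfSimilarU]

theorem selfSimilarU_mul_sqrt (w : ℝ → ℝ) (y : ℝ) {t : ℝ} (ht : 0 < t) :
    selfSimilarU w (y * √t) t = √t * w y := by
  rw [selfSimilarU, mul_div_cancel_right₀ _ (Real.sqrt_pos.2 ht).ne']

theorem hasDerivWithinAt_selfSimilarU_space {w : ℝ → ℝ} {w' t x : ℝ} {s : Set ℝ} (ht : 0 < t)
    (hw : HasDerivWithinAt w w' s (x / √t)) :
    HasDerivWithinAt (fun ξ => selfSimilarU w ξ t) w' ((· / √t) ⁻¹' s) x := by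
  have hne : √t ≠ 0 := (Real.sqrt_pos.2 ht).ne'
  refine ((hw.comp x ((hasDerivAt_id x).div_const (√t)).hasDerivWithinAt
    (mapsTo_preimage _ s)).const_mul (√t)).congr_deriv ?_
  field_simp

theorem deriv_selfSimilarU_space (w : ℝ → ℝ) {t : ℝ} (ht : 0 < t) :
    deriv (fun ξ => selfSimilarU w ξ t) = fun x => deriv w (x / √t) := by
  have hne : √t ≠ 0 := (Real.sqrt_pos.2 ht).ne'
  funext x
  simp only [selfSimilarU, div_eq_inv_mul, deriv_const_mul_field, deriv_comp_mul_left, smul_eq_mul]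
  exact mul_inv_cancel_left₀ hne _

theorem hasDerivAt_selfSimilarU_time {w : ℝ → ℝ} {w' t x : ℝ} (ht : 0 < t)
    (hw : HasDerivAt w w' (x / √t)) :
    HasDerivAt (fun τ => selfSimilarU w x τ) ((w (x / √t) / 2 - x / √t / 2 * w') / √t) t := by
  have hne : √t ≠ 0 := (Real.sqrt_pos.2 ht).ne'
  have hsqrt := Real.hasDerivAt_sqrt ht.ne'
  have harg := (hasDerivAt_const t x).div hsqrt hne
  refine (hsqrt.mul (hw.comp t harg)).congr_deriv ?_
  simp only [Function.comp_apply, Pi.div_apply]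
  field_simp
  ring

theorem SolvesHermiteOn.selfSimilarU_heat {h t x : ℝ} {s : Set ℝ} {w : ℝ → ℝ}
    (hw : SolvesHermiteOn h s w) (ht : 0 < t) (hx : x / √t ∈ s) :
    DifferentiableAt ℝ (fun ξ => selfSimilarU w ξ t) x ∧
    DifferentiableAt ℝ (deriv (fun ξ => selfSimilarU w ξ t)) x ∧
    HasDerivAt (fun τ => selfSimilarU w x τ)
      (deriv (deriv (fun ξ => selfSimilarU w ξ t)) x + h / √t) t := by
  obtain ⟨hd, hd₂, hode⟩ := hw _ hx
  have hspace₂ : HasDerivAt (deriv (fun ξ => selfSimilarU w ξ t))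
      (deriv (deriv w) (x / √t) * (1 / √t)) x := by
    rw [deriv_selfSimilarU_space w ht]
    exact hd₂.hasDerivAt.comp x ((hasDerivAt_id x).div_const _)
  refine ⟨?_, hspace₂.differentiableAt, ?_⟩
  · have := hasDerivWithinAt_selfSimilarU_space (s := univ) ht hd.hasDerivAt.hasDerivWithinAt
    exact (hasDerivWithinAt_univ.1 this).differentiableAt
  · refine (hasDerivAt_selfSimilarU_time ht hd.hasDerivAt).congr_deriv ?_
    rw [hspace₂.deriv, ← hode]
    ring

theorem solvesHermiteOn_of_selfSimilarU_heat {h : ℝ} {s : Set ℝ} {w : ℝ → ℝ}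
    (hw : ∀ x ∈ s, DifferentiableAt ℝ (fun ξ => selfSimilarU w ξ 1) x ∧
      DifferentiableAt ℝ (deriv (fun ξ => selfSimilarU w ξ 1)) x ∧
      HasDerivAt (fun τ => selfSimilarU w x τ)
        (deriv (deriv (fun ξ => selfSimilarU w ξ 1)) x + h) 1) :
    SolvesHermiteOn h s w := by
  simp only [selfSimilarU_one] at hw
  intro y hy
  obtain ⟨hd, hd₂, htime⟩ := hw y hy
  refine ⟨hd, hd₂, ?_⟩
  have hprofile : HasDerivAt w (deriv w y) (y / √1) := by simpa using hd.hasDerivAt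
  have := htime.unique (hasDerivAt_selfSimilarU_time one_pos hprofile)
  simp only [Real.sqrt_one, div_one] at this
  linarith

theorem abs_selfSimilarU_le {M σ : ℝ} {w : ℝ → ℝ} (hM : ∀ y, σ ≤ y → |w y| ≤ M) {t x : ℝ}
    (ht : 0 < t) (hx : σ * √t ≤ x) : |selfSimilarU w x t| ≤ √t * M := by
  rw [selfSimilarU, abs_mul, abs_of_nonneg (Real.sqrt_nonneg t)]
  gcongr
  exact hM _ ((le_div_iff₀ (Real.sqrt_pos.2 ht)).2 hx)

theorem exists_forall_abs_selfSimilarU_le {M σ : ℝ} {w : ℝ → ℝ} (hM : ∀ y, σ ≤ y → |w y| ≤ M)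
    {ε : ℝ} (hε : 0 < ε) :
    ∃ δ > 0, ∀ t, 0 < t → t < δ → ∀ x, σ * √t ≤ x → |selfSimilarU w x t| ≤ ε := by
  have hM_nonneg : 0 ≤ M := (abs_nonneg _).trans (hM σ le_rfl)
  refine ⟨(ε / (M + 1)) ^ 2, by positivity, fun t ht htδ x hx => ?_⟩
  calc |selfSimilarU w x t| ≤ √t * M := abs_selfSimilarU_le hM ht hx
    _ ≤ ε / (M + 1) * (M + 1) := by
      gcongr
      · exact (Real.sqrt_le_left (by positivity)).2 htδ.le
      · linarith
    _ = ε := by field_simp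

/-- The bounded solution of the Hermite-type equation that vanishes at `σ`. -/
noncomputable def boundaryProfile (h σ : ℝ) : ℝ → ℝ :=
  hermiteSolution h 0 (-(2 * h / gaussianTail 2 σ))

theorem boundaryProfile_eq (h σ y : ℝ) :
    boundaryProfile h σ y = 2 * h * (1 - gaussianTail 2 y / gaussianTail 2 σ) := by
  rw [boundaryProfile, hermiteSolution]
  ring

theorem boundaryProfile_mem_Icc {h σ y : ℝ} (hh : 0 ≤ h) (hy : σ ≤ y) :
    boundaryProfile h σ y ∈ Icc 0 (2 * h) := by
  have hle : gaussianTail 2 y / gaussianTail 2 σ ≤ 1 :=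
    (div_le_one (gaussianTail_pos 2 σ)).2 ((strictAnti_gaussianTail_succ 1).antitone hy)
  have hnonneg : 0 ≤ gaussianTail 2 y / gaussianTail 2 σ :=
    (div_pos (gaussianTail_pos 2 y) (gaussianTail_pos 2 σ)).le
  rw [boundaryProfile_eq]
  constructor <;> nlinarith

/-- The boundary value problem for the profile `w` to which the self-similar ansatz reduces the
free boundary problem. -/
structure SolvesProfileProblem (α h σ : ℝ) (w : ℝ → ℝ) : Prop where
  bounded : ∃ M, ∀ y, σ ≤ y → |w y| ≤ M
  hermite : SolvesHermiteOn h (Ioi σ) w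
  nonneg : ∀ y, σ ≤ y → 0 ≤ w y
  dirichlet : w σ = 0
  neumann : HasDerivWithinAt w α (Ici σ) σ

section ProfileProblem

variable {α h σ : ℝ} {w : ℝ → ℝ}

theorem solvesProfileProblem_boundaryProfile (hh : 0 ≤ h)
    (hσ : 2 * h * gaussianTail 1 σ = α * gaussianTail 2 σ) :
    SolvesProfileProblem α h σ (boundaryProfile h σ) where
  bounded := by
    refine ⟨2 * h, fun y hy => ?_⟩
    obtain ⟨hnonneg, hle⟩ := boundaryProfile_mem_Icc hh hy
    rwa [abs_of_nonneg hnonneg]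
  hermite := solvesHermiteOn_hermiteSolution _ _ _ _
  nonneg y hy := (boundaryProfile_mem_Icc hh hy).1
  dirichlet := by simp [boundaryProfile_eq, (gaussianTail_pos 2 σ).ne']
  neumann := by
    have hne := (gaussianTail_pos 2 σ).ne'
    refine ((hasDerivAt_hermiteSolution _ _ _ σ).congr_deriv ?_).hasDerivWithinAt
    field_simp
    linarith

theorem SolvesProfileProblem.exists_eqOn_hermiteSolution (hw : SolvesProfileProblem α h σ w) :
    ∃ b, EqOn w (hermiteSolution h 0 b) (Ici σ) := by
  obtain ⟨a, b, hab⟩ := hw.hermite.exists_eqOn_hermiteSolution isOpen_Ioi isPreconnected_Ioi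
  obtain ⟨M, hM⟩ := hw.bounded
  have ha : a = 0 := by
    refine eq_zero_of_hermiteSolution_bounded (h := h) (b := b) (M := M) ?_
    filter_upwards [eventually_gt_atTop σ] with y hy
    exact hab hy ▸ hM y hy.le
  have hcont : ContinuousOn w (Ici σ) := by
    intro y hy
    rcases eq_or_lt_of_le (mem_Ici.1 hy) with rfl | hy
    · exact hw.neumann.continuousWithinAt
    · exact (hw.hermite y hy).1.continuousAt.continuousWithinAt
  subst ha
  exact ⟨b, hab.of_subset_closure hcont
    (fun y _ => (hasDerivAt_hermiteSolution h 0 b y).continuousAt.continuousWithinAt)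
    Ioi_subset_Ici_self (closure_Ioi σ).ge⟩

theorem SolvesProfileProblem.eqOn_boundaryProfile (hw : SolvesProfileProblem α h σ w) :
    EqOn w (boundaryProfile h σ) (Ici σ) := by
  obtain ⟨b, hb⟩ := hw.exists_eqOn_hermiteSolution
  have hvanish : hermiteSolution h 0 b σ = 0 := hb self_mem_Ici ▸ hw.dirichlet
  have hb_eq : b = -(2 * h / gaussianTail 2 σ) := by
    rw [← neg_div, eq_div_iff (gaussianTail_pos 2 σ).ne']
    rw [hermiteSolution] at hvanish
    linarith
  subst hb_eq
  exact hb

theorem SolvesProfileProblem.boundary_eq (hw : SolvesProfileProblem α h σ w) :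
    2 * h * gaussianTail 1 σ = α * gaussianTail 2 σ := by
  have hslope : HasDerivWithinAt w (0 - -(2 * h / gaussianTail 2 σ) * gaussianTail 1 σ)
      (Ici σ) σ :=
    (hasDerivAt_hermiteSolution _ _ _ σ).hasDerivWithinAt.congr hw.eqOn_boundaryProfile
      (hw.eqOn_boundaryProfile self_mem_Ici)
  have hne := (gaussianTail_pos 2 σ).ne'
  rw [(uniqueDiffOn_Ici σ σ self_mem_Ici).eq_deriv _ hw.neumann hslope]
  field_simp
  ring

theorem SolvesProfileProblem.isSelfSimilarSolution (hw : SolvesProfileProblem α h σ w) :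
    IsSelfSimilarSolution α h σ w := by
  obtain ⟨M, hM⟩ := hw.bounded
  refine ⟨⟨M, hM⟩, fun t ht x hx => ?_, fun t ht x hx => ?_, fun t ht => ?_, fun t ht => ?_,
    fun ε hε => exists_forall_abs_selfSimilarU_le hM hε⟩
  · exact hw.hermite.selfSimilarU_heat ht ((lt_div_iff₀ (Real.sqrt_pos.2 ht)).2 hx)
  · exact mul_nonneg (Real.sqrt_nonneg t)
      (hw.nonneg _ ((le_div_iff₀ (Real.sqrt_pos.2 ht)).2 hx))
  · rw [selfSimilarU_mul_sqrt w σ ht, hw.dirichlet, mul_zero]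
  · have hpos := Real.sqrt_pos.2 ht
    have hneumann : HasDerivWithinAt w α (Ici σ) (σ * √t / √t) := by
      rw [mul_div_cancel_right₀ _ hpos.ne']
      exact hw.neumann
    have hIci : (· / √t) ⁻¹' Ici σ = Ici (σ * √t) := by
      ext x
      exact le_div_iff₀ hpos
    exact (hIci ▸ hasDerivWithinAt_selfSimilarU_space ht hneumann).derivWithin
      (uniqueDiffOn_Ici _ _ self_mem_Ici)

theorem IsSelfSimilarSolution.solvesProfileProblem (hα : α ≠ 0)
    (hw : IsSelfSimilarSolution α h σ w) : SolvesProfileProblem α h σ w := by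
  obtain ⟨hbounded, hheat, hnonneg, hdirichlet, hneumann, -⟩ := hw
  refine ⟨hbounded, solvesHermiteOn_of_selfSimilarU_heat fun x hx => ?_, fun y hy => ?_, ?_, ?_⟩
  · simpa using hheat 1 one_pos x (by simpa using hx)
  · simpa [selfSimilarU_one] using hnonneg 1 one_pos y (by simpa using hy)
  · simpa [selfSimilarU_one] using hdirichlet 1 one_pos
  · have hderiv : derivWithin w (Ici σ) σ = α := by
      simpa [selfSimilarU_one] using hneumann 1 one_pos
    -- `derivWithin` is zero where `w` is not differentiable, which `α ≠ 0` excludes.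
    have hdiff : DifferentiableWithinAt ℝ w (Ici σ) σ :=
      differentiableWithinAt_of_derivWithin_ne_zero (hderiv ▸ hα)
    exact hderiv ▸ hdiff.hasDerivWithinAt

end ProfileProblem

/-- **Existence and uniqueness of a self-similar solution** for the source `f = h/√t`,
`h > 0`, with initial domain `D₀ = (0,∞)` and zero initial value: there is a unique
bounded solution of the self-similar form `u(x,t) = √t·w(x/√t)`, `s(t) = σ√t`.
Moreover `h ↦ σ(h)` is strictly decreasing and smooth on `(0,∞)`, `σ(α/√Real.pi) = 0`, and
`σ(h) < 0 ↔ h > α/√Real.pi`, `σ(h) > 0 ↔ h < α/√Real.pi`. -/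
theorem self_similar_solution_exists_unique (α : ℝ) (hα : 0 < α) :
    ∃ sigma : ℝ → ℝ,
      (∀ h : ℝ, 0 < h →
        ∃ w : ℝ → ℝ, IsSelfSimilarSolution α h (sigma h) w ∧
          ∀ (σ' : ℝ) (w' : ℝ → ℝ), IsSelfSimilarSolution α h σ' w' →
            σ' = sigma h ∧ ∀ y : ℝ, sigma h ≤ y → w' y = w y) ∧
      StrictAntiOn sigma (Ioi 0) ∧
      ContDiffOn ℝ (⊤ : ℕ∞) sigma (Ioi 0) ∧
      sigma (α / Real.sqrt Real.pi) = 0 ∧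
      (∀ h : ℝ, 0 < h →
        (sigma h < 0 ↔ α / Real.sqrt Real.pi < h) ∧ (0 < sigma h ↔ h < α / Real.sqrt Real.pi)) := by
  have hpi : 0 < α / √Real.pi := div_pos hα (Real.sqrt_pos.2 Real.pi_pos)
  have hanti := strictAntiOn_freeBoundaryCoeff hα
  have hzero := freeBoundaryCoeff_div_sqrt_pi hα
  refine ⟨freeBoundaryCoeff α, fun h hh => ?_, hanti, contDiffOn_freeBoundaryCoeff hα.ne', hzero,
    fun h hh => ⟨?_, ?_⟩⟩
  · have hσ := (eq_freeBoundaryCoeff_iff hα hh).1 rfl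
    refine ⟨boundaryProfile h (freeBoundaryCoeff α h),
      (solvesProfileProblem_boundaryProfile hh.le hσ).isSelfSimilarSolution, fun σ' w' hw' => ?_⟩
    have hprofile := hw'.solvesProfileProblem hα.ne'
    obtain rfl := (eq_freeBoundaryCoeff_iff hα hh).2 hprofile.boundary_eq
    exact ⟨rfl, hprofile.eqOn_boundaryProfile⟩
  · simpa only [hzero] using hanti.lt_iff_gt hh hpi
  · simpa only [hzero] using hanti.lt_iff_gt hpi hh
end
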